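/- For every ω ∈ ℂ with Im ω > 0 there exist constants C > 0 and c > 0 (depending only on ω and α) such that for all ρ > 0 and all φ ∈ [0, 2π] \ {φ₊, φ₋}: |∫_ℝ 𝒵(β, φ) cosh β · e^{iωρ cosh β} dβ| ≤ C e^{−cρ} (1 + ρ^{−1/2}), uniformly in φ. -/

import Mathlib

/-!
The weight `cosh β · exp (iωρ cosh β)` is even in `β`, so only the even part of the kernel
contributes to the integral. The kernel is a signed sum of four terms `coth ((β + iθ)/4)`, and

`coth ((β + iθ)/4) + coth ((-β + iθ)/4) = -2i sin t / (cosh (β/2) - cos t)`, with `t = θ/2`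

(`norm_ccoth_add_ccoth`). This Poisson-type kernel is dominated by a Cauchy density of integral
`4π`, whatever `t` is (`exists_cauchy_majorant`), so the poles approaching the real line as `φ → φ±`
do no harm. Multiplying by `cosh β` costs only an additional multiple of `cosh (β/2)`
(`exists_majorant_mul_cosh`).

With `a = ρ Im ω`, the weight has modulus `cosh β · exp (-a cosh β)`. The Cauchy part contributes
`O(exp (-a))` because `cosh β ≥ 1`; the part with `cosh (β/2)` is evaluated exactly by
`u = sinh (β/2)` and gives a multiple of `exp (-a) · a^(-1/2)` (`integral_cosh_half_mul_exp`). Hence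
`c = Im ω`.
-/

open Real MeasureTheory Set Filter

/-- Complex hyperbolic cotangent. -/
noncomputable def ccoth (z : ℂ) : ℂ := Complex.cosh z / Complex.sinh z

/-- The function `U` from the Sommerfeld kernel construction. -/
noncomputable def Ufun (α : ℝ) (ζ : ℂ) : ℂ :=
  ccoth ((1/4 : ℂ) * (ζ - Complex.I * (π/2 : ℝ) + Complex.I * (α : ℝ))) -
  ccoth ((1/4 : ℂ) * (ζ - Complex.I * (π/2 : ℝ) - Complex.I * (α : ℝ)))

/-- The function `Z`. -/
noncomputable def Zfun (α : ℝ) (z : ℂ) : ℂ :=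
  -Ufun α (z - Complex.I * (π/2 : ℝ)) + Ufun α (z - Complex.I * (5*π/2 : ℝ))

/-- The Sommerfeld-type kernel `𝒵(β, φ) = Z(β + 2πi − iφ)`. -/
noncomputable def Zker (α : ℝ) (β φ : ℝ) : ℂ :=
  Zfun α ((β : ℂ) + 2*(π : ℝ)*Complex.I - Complex.I * (φ : ℝ))


/-- Symmetrizing `coth` in the real part of its argument leaves a Poisson-type kernel:
`coth A + coth B = sinh (A + B) / (sinh A sinh B)` with `A + B = 2iy` and
`2 sinh A sinh B = cosh (A + B) - cosh (A - B)`. -/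
theorem norm_ccoth_add_ccoth (x y : ℝ) (hx : x ≠ 0) :
    ‖ccoth (x + y * Complex.I) + ccoth (-x + y * Complex.I)‖
      = 2 * |Real.sin (2 * y)| / (Real.cosh (2 * x) - Real.cos (2 * y)) := by
  have hpos : 0 < Real.cosh (2 * x) - Real.cos (2 * y) := by
    have h1 := Real.one_lt_cosh.2 (show 2 * x ≠ 0 by simpa using hx)
    linarith [Real.cos_le_one (2 * y)]
  set A : ℂ := x + y * Complex.I with hA
  set B : ℂ := -x + y * Complex.I with hB
  have hprod : Complex.sinh A * Complex.sinh B
      = -(((Real.cosh (2 * x) - Real.cos (2 * y)) / 2 : ℝ) : ℂ) := by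
    have e1 : ((Real.cosh (2 * x) : ℝ) : ℂ) = Complex.cosh (A - B) := by
      rw [Complex.ofReal_cosh]; congr 1; rw [hA, hB]; push_cast; ring
    have e2 : ((Real.cos (2 * y) : ℝ) : ℂ) = Complex.cosh (A + B) := by
      rw [Complex.ofReal_cos, ← Complex.cosh_mul_I]; congr 1; rw [hA, hB]; push_cast; ring
    push_cast [e1, e2]
    rw [Complex.cosh_add, Complex.cosh_sub]
    ring
  have hne : Complex.sinh A * Complex.sinh B ≠ 0 := by
    rw [hprod, neg_ne_zero, Complex.ofReal_ne_zero]; positivity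
  have hnum : Complex.sinh (A + B) = (Real.sin (2 * y) : ℝ) * Complex.I := by
    rw [Complex.ofReal_sin, ← Complex.sinh_mul_I]; congr 1; rw [hA, hB]; push_cast; ring
  have : ccoth A + ccoth B = Complex.sinh (A + B) / (Complex.sinh A * Complex.sinh B) := by
    rw [ccoth, ccoth, div_add_div _ _ (left_ne_zero_of_mul hne) (right_ne_zero_of_mul hne),
      Complex.sinh_add A B]
    ring
  rw [this, hprod, hnum, norm_div, norm_neg, norm_mul, Complex.norm_I, Complex.norm_real,
    Complex.norm_real, Real.norm_eq_abs, Real.norm_eq_abs, abs_of_pos (half_pos hpos)]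
  field_simp

theorem sq_add_le_cosh_sub_cos (s t : ℝ) :
    s ^ 2 / 2 + 2 * Real.sin (t / 2) ^ 2 ≤ Real.cosh s - Real.cos t := by
  have h1 : 1 + s ^ 2 / 2 ≤ Real.cosh s := by
    have h2 : Real.cosh s = 1 + 2 * Real.sinh (s / 2) ^ 2 := by
      have := Real.cosh_two_mul (s / 2)
      rw [show 2 * (s / 2) = s by ring, Real.cosh_sq] at this
      linarith
    have h3 : (s / 2) ^ 2 ≤ Real.sinh (s / 2) ^ 2 := by
      rw [sq_le_sq, Real.abs_sinh]
      exact Real.self_le_sinh_iff.2 (abs_nonneg _)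
    nlinarith
  have h4 : Real.cos t = 1 - 2 * Real.sin (t / 2) ^ 2 := by
    have := Real.cos_two_mul' (t / 2)
    rw [show 2 * (t / 2) = t by ring, Real.cos_sq'] at this
    linarith
  linarith

/-- The Poisson-type kernel is dominated by a Cauchy density whose integral does not depend on
its width, which is proportional to `|sin (t / 2)|`; hence the bound `4π` is uniform in `t`. -/
theorem exists_cauchy_majorant (t : ℝ) :
    ∃ G : ℝ → ℝ, Integrable G ∧ (∀ β, 0 ≤ G β) ∧ ∫ β, G β ≤ 4 * π ∧ ∀ β : ℝ, β ≠ 0 →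
      |Real.sin t| / (Real.cosh (β / 2) - Real.cos t) ≤ G β := by
  set d := |Real.sin (t / 2)| with hd
  have hst : |Real.sin t| ≤ 2 * d := by
    have : Real.sin t = 2 * Real.sin (t / 2) * Real.cos (t / 2) := by
      rw [← Real.sin_two_mul]; congr 1; ring
    rw [this, abs_mul, abs_mul, abs_two]
    exact mul_le_of_le_one_right (by positivity) (Real.abs_cos_le_one _)
  -- For `sin (t / 2) = 0` the Cauchy density degenerates, but then the kernel vanishes.
  rcases (abs_nonneg (Real.sin (t / 2))).eq_or_lt with h0 | h0
  · refine ⟨fun _ => 0, by simp, by simp, by simp; positivity, fun β _ => ?_⟩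
    have : |Real.sin t| = 0 := le_antisymm (by rw [hd, ← h0] at hst; simpa using hst) (abs_nonneg _)
    rw [this]; simp
  · rw [← hd] at h0
    refine ⟨fun β => (1 / d) * (1 + (β / (4 * d)) ^ 2)⁻¹,
      (integrable_inv_one_add_sq.comp_div (by positivity)).const_mul _,
      fun β => by positivity, ?_, fun β hβ => ?_⟩
    · rw [integral_const_mul,
        Measure.integral_comp_div (fun x : ℝ => (1 + x ^ 2)⁻¹) (4 * d),
        integral_univ_inv_one_add_sq, abs_of_pos (by positivity), smul_eq_mul]
      apply le_of_eq; field_simp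
    · have h := sq_add_le_cosh_sub_cos (β / 2) t
      rw [← sq_abs (Real.sin (t / 2)), ← hd] at h
      have : (1 / d) * (1 + (β / (4 * d)) ^ 2)⁻¹ = 2 * d / ((β / 2) ^ 2 / 2 + 2 * d ^ 2) := by
        field_simp; ring
      beta_reduce
      rw [this]
      gcongr

/-- The growth of `cosh β` is absorbed through
`cosh β - cos 2t = 2 (cosh (β/2) - cos t) (cosh (β/2) + cos t)`, which splits the product into a
multiple of `cosh (β/2)` and a bounded multiple of the Poisson-type kernel. -/
theorem exists_majorant_mul_cosh (t : ℝ) :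
    ∃ G : ℝ → ℝ, Integrable G ∧ (∀ β, 0 ≤ G β) ∧ ∫ β, G β ≤ 4 * π ∧ ∀ β : ℝ, β ≠ 0 →
      ‖ccoth ((β / 4 : ℝ) + (t / 2 : ℝ) * Complex.I)
          + ccoth (-(β / 4 : ℝ) + (t / 2 : ℝ) * Complex.I)‖ * Real.cosh β
        ≤ 8 * Real.cosh (β / 2) + 2 * G β := by
  obtain ⟨G, hG, hG0, hGi, hb⟩ := exists_cauchy_majorant t
  refine ⟨G, hG, hG0, hGi, fun β hβ => ?_⟩
  rw [norm_ccoth_add_ccoth _ _ (by simpa using hβ), show 2 * (t / 2) = t by ring,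
    show 2 * (β / 4) = β / 2 by ring]
  have hb := hb β hβ
  have h1 : 1 < Real.cosh (β / 2) := Real.one_lt_cosh.2 (by simpa using hβ)
  have hpos : 0 < Real.cosh (β / 2) - Real.cos t := by linarith [Real.cos_le_one t]
  have hc : Real.cosh β = 2 * Real.cosh (β / 2) ^ 2 - 1 := by
    have := Real.cosh_two_mul (β / 2)
    rw [show 2 * (β / 2) = β by ring, Real.sinh_sq] at this
    linarith
  have hs := Real.abs_sin_le_one t
  have hk : 0 ≤ |Real.sin t| / (Real.cosh (β / 2) - Real.cos t) := by positivity
  have e : 2 * |Real.sin t| / (Real.cosh (β / 2) - Real.cos t) * Real.cosh β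
      = 4 * |Real.sin t| * (Real.cosh (β / 2) + Real.cos t)
        + 2 * (2 * Real.cos t ^ 2 - 1) *
          (|Real.sin t| / (Real.cosh (β / 2) - Real.cos t)) := by
    rw [hc]; field_simp; ring
  rw [e]
  have hcos := Real.cos_sq_le_one t
  have i1 : |Real.sin t| * (Real.cosh (β / 2) + Real.cos t) ≤ 1 * (2 * Real.cosh (β / 2)) := by
    apply mul_le_mul hs <;> linarith [Real.cos_le_one t, Real.neg_one_le_cos t]
  have i2 : (2 * Real.cos t ^ 2 - 1) * (|Real.sin t| / (Real.cosh (β / 2) - Real.cos t))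
      ≤ 1 * (|Real.sin t| / (Real.cosh (β / 2) - Real.cos t)) :=
    mul_le_mul_of_nonneg_right (by linarith) hk
  linarith

/-- The substitution `u = sinh (β/2)`, for which `cosh β = 1 + 2u²`, turns the integral into a
Gaussian one. -/
theorem integral_cosh_half_mul_exp (a : ℝ) (ha : 0 < a) :
    Integrable (fun β : ℝ => Real.cosh (β / 2) * Real.exp (-a * Real.cosh β)) ∧
    ∫ β : ℝ, Real.cosh (β / 2) * Real.exp (-a * Real.cosh β)
      = 2 * Real.exp (-a) * √(π / (2 * a)) := by
  have hder : ∀ x ∈ (univ : Set ℝ), HasDerivWithinAt (fun β : ℝ => Real.sinh (β / 2))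
      (Real.cosh (x / 2) * (1 / 2)) univ x := fun x _ =>
    (((hasDerivAt_id x).div_const 2).sinh).hasDerivWithinAt
  have hinj : InjOn (fun β : ℝ => Real.sinh (β / 2)) univ := fun x _ y _ h => by
    have := Real.sinh_injective h
    linarith
  have himg : (fun β : ℝ => Real.sinh (β / 2)) '' univ = univ := by
    rw [image_univ, range_eq_univ]
    intro y
    obtain ⟨x, rfl⟩ := Real.sinh_surjective y
    exact ⟨2 * x, by simp⟩
  have hf : ∀ β : ℝ, Real.cosh (β / 2) * Real.exp (-a * Real.cosh β)
      = (2 * Real.exp (-a)) * (|Real.cosh (β / 2) * (1 / 2)| •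
          Real.exp (-(2 * a) * Real.sinh (β / 2) ^ 2)) := fun β => by
    have hc : Real.cosh β = 1 + 2 * Real.sinh (β / 2) ^ 2 := by
      have := Real.cosh_two_mul (β / 2)
      rw [show 2 * (β / 2) = β by ring, Real.cosh_sq] at this
      linarith
    rw [abs_of_pos (mul_pos (Real.cosh_pos _) (by norm_num)), hc, smul_eq_mul,
      show -a * (1 + 2 * Real.sinh (β / 2) ^ 2) = -a + -(2 * a) * Real.sinh (β / 2) ^ 2 by ring,
      Real.exp_add]
    ring
  have hgi := integrable_exp_neg_mul_sq (show 0 < 2 * a by positivity)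
  simp only [hf]
  constructor
  · have := (integrableOn_image_iff_integrableOn_abs_deriv_smul MeasurableSet.univ hder hinj
      (fun u => Real.exp (-(2 * a) * u ^ 2))).1 (by rw [himg]; exact hgi.integrableOn)
    exact (integrableOn_univ.1 this).const_mul _
  · have := integral_image_eq_integral_abs_deriv_smul MeasurableSet.univ hder hinj
      (fun u => Real.exp (-(2 * a) * u ^ 2))
    rw [himg, setIntegral_univ, setIntegral_univ, integral_gaussian] at this
    rw [integral_const_mul, ← this]

theorem Zker_eq (α β φ : ℝ) : Zker α β φ =
    -ccoth ((β / 4 : ℝ) + ((π - φ + α) / 2 / 2 : ℝ) * Complex.I)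
    + ccoth ((β / 4 : ℝ) + ((π - φ - α) / 2 / 2 : ℝ) * Complex.I)
    + ccoth ((β / 4 : ℝ) + ((-π - φ + α) / 2 / 2 : ℝ) * Complex.I)
    - ccoth ((β / 4 : ℝ) + ((-π - φ - α) / 2 / 2 : ℝ) * Complex.I) := by
  have h : ∀ a b c d a' b' c' d' : ℂ, a = a' → b = b' → c = c' → d = d' →
      -(ccoth a - ccoth b) + (ccoth c - ccoth d) = -ccoth a' + ccoth b' + ccoth c' - ccoth d' := by
    rintro a b c d _ _ _ _ rfl rfl rfl rfl; ring
  unfold Zker Zfun Ufun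
  apply h <;> push_cast <;> ring

theorem exists_majorant_Zker_even (α φ : ℝ) :
    ∃ G : ℝ → ℝ, Integrable G ∧ (∀ β, 0 ≤ G β) ∧ ∫ β, G β ≤ 32 * π ∧ ∀ β : ℝ, β ≠ 0 →
      ‖Zker α β φ + Zker α (-β) φ‖ * Real.cosh β ≤ 32 * Real.cosh (β / 2) + G β := by
  obtain ⟨G₁, i₁, p₁, b₁, h₁⟩ := exists_majorant_mul_cosh ((π - φ + α) / 2)
  obtain ⟨G₂, i₂, p₂, b₂, h₂⟩ := exists_majorant_mul_cosh ((π - φ - α) / 2)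
  obtain ⟨G₃, i₃, p₃, b₃, h₃⟩ := exists_majorant_mul_cosh ((-π - φ + α) / 2)
  obtain ⟨G₄, i₄, p₄, b₄, h₄⟩ := exists_majorant_mul_cosh ((-π - φ - α) / 2)
  refine ⟨fun β => 2 * (G₁ β + G₂ β + G₃ β + G₄ β),
    (((i₁.add i₂).add i₃).add i₄).const_mul 2,
    fun β => by linarith [p₁ β, p₂ β, p₃ β, p₄ β], ?_, fun β hβ => ?_⟩
  · have e : ∫ β, (G₁ β + G₂ β + G₃ β + G₄ β)
        = (∫ β, G₁ β) + (∫ β, G₂ β) + (∫ β, G₃ β) + ∫ β, G₄ β := by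
      rw [← integral_add' i₁ i₂, ← integral_add' (i₁.add i₂) i₃,
        ← integral_add' ((i₁.add i₂).add i₃) i₄]
      rfl
    rw [integral_const_mul, e]
    linarith
  · have h₁ := h₁ β hβ
    have h₂ := h₂ β hβ
    have h₃ := h₃ β hβ
    have h₄ := h₄ β hβ
    have tri : ∀ a b c d a' b' c' d' : ℂ,
        ‖(-a + b + c - d) + (-a' + b' + c' - d')‖ ≤ ‖a + a'‖ + ‖b + b'‖ + ‖c + c'‖ + ‖d + d'‖ := by
      intro a b c d a' b' c' d'
      rw [show (-a + b + c - d) + (-a' + b' + c' - d')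
        = -(a + a') + (b + b') + (c + c') - (d + d') by ring]
      refine (norm_sub_le _ _).trans ?_
      gcongr
      refine (norm_add₃_le).trans ?_
      rw [norm_neg]
    rw [Zker_eq, Zker_eq, show ((-β / 4 : ℝ) : ℂ) = -((β / 4 : ℝ) : ℂ) by push_cast; ring]
    refine (mul_le_mul_of_nonneg_right (tri _ _ _ _ _ _ _ _) (Real.cosh_pos β).le).trans ?_
    linarith

/-- An integral over the line is controlled by the even part of the integrand. No integrability of
`f` is needed: when it fails, `∫ f` is `0` by convention. -/
theorem norm_integral_le_of_even_part {f : ℝ → ℂ} {g : ℝ → ℝ} (hg : Integrable g)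
    (h : ∀ β : ℝ, β ≠ 0 → ‖f β + f (-β)‖ ≤ g β) (hg0 : 0 ≤ ∫ β, g β) :
    ‖∫ β, f β‖ ≤ ∫ β, g β := by
  by_cases hf : Integrable f
  · have e : 2 * ∫ β, f β = ∫ β, (f β + f (-β)) := by
      rw [integral_add hf hf.comp_neg, integral_neg_eq_self f, two_mul]
    have hle : ‖∫ β, (f β + f (-β))‖ ≤ ∫ β, g β :=
      norm_integral_le_of_norm_le hg
        ((Measure.ae_ne volume (0 : ℝ)).mono fun β hβ => h β hβ)
    rw [← e, norm_mul, Complex.norm_ofNat] at hle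
    linarith [norm_nonneg (∫ β, f β)]
  · rw [integral_undef hf, norm_zero]
    exact hg0

/-- Uniform bound `C e^{−cρ}(1 + ρ^{−1/2})` for the `ρ`-derivative integral
`∫_ℝ 𝒵(β,φ) cosh β · e^{iωρ cosh β} dβ`, uniformly over `φ ∈ [0,2π] \ {φ₊, φ₋}`. -/
theorem diffracted_integral_cosh_bound (α : ℝ) (hα : α ∈ Set.Ioo (π/2) π)
    (ω : ℂ) (hω : 0 < ω.im) :
    ∃ C > 0, ∃ c > 0, ∀ ρ : ℝ, 0 < ρ →
      ∀ φ ∈ Set.Icc (0:ℝ) (2*π), φ ≠ π + α → φ ≠ π - α →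
      ‖∫ β : ℝ, Zker α β φ * (Real.cosh β : ℂ) *
          Complex.exp (Complex.I * ω * (ρ : ℂ) * (Real.cosh β : ℂ))‖
        ≤ C * Real.exp (-c * ρ) * (1 + ρ ^ (-(1/2) : ℝ)) := by
  refine ⟨64 * √(π / (2 * ω.im)) + 32 * π, by positivity, ω.im, hω, ?_⟩
  intro ρ hρ φ _ _ _
  obtain ⟨G, hG, hG0, hGi, hb⟩ := exists_majorant_Zker_even α φ
  have ha : 0 < ω.im * ρ := mul_pos hω hρ
  obtain ⟨hI, hIv⟩ := integral_cosh_half_mul_exp (ω.im * ρ) ha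
  have hint : ∫ β : ℝ, (32 * (Real.cosh (β / 2) * Real.exp (-(ω.im * ρ) * Real.cosh β))
        + Real.exp (-(ω.im * ρ)) * G β)
      = 32 * (2 * Real.exp (-(ω.im * ρ)) * √(π / (2 * (ω.im * ρ))))
        + Real.exp (-(ω.im * ρ)) * ∫ β, G β := by
    rw [integral_add (hI.const_mul _) (hG.const_mul _), integral_const_mul,
      integral_const_mul, hIv]
  have hG0' : 0 ≤ ∫ β, G β := integral_nonneg hG0
  refine (norm_integral_le_of_even_part ((hI.const_mul 32).add
    (hG.const_mul (Real.exp (-(ω.im * ρ))))) (fun β hβ => ?_) ?_).trans ?_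
  · simp only [Real.cosh_neg, Pi.add_apply]
    rw [← add_mul, ← add_mul, norm_mul, norm_mul, Complex.norm_real, Real.norm_eq_abs,
      abs_of_pos (Real.cosh_pos β), Complex.norm_exp]
    have hre : (Complex.I * ω * (ρ : ℂ) * (Real.cosh β : ℂ)).re = -(ω.im * ρ) * Real.cosh β := by
      rw [Complex.re_mul_ofReal, Complex.re_mul_ofReal, Complex.I_mul_re]
      ring
    rw [hre]
    have hexp : Real.exp (-(ω.im * ρ) * Real.cosh β) ≤ Real.exp (-(ω.im * ρ)) :=
      Real.exp_le_exp.2 (by nlinarith [Real.one_le_cosh β])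
    have h1 := mul_le_mul_of_nonneg_right (hb β hβ) (Real.exp_pos (-(ω.im * ρ) * Real.cosh β)).le
    have h2 := mul_le_mul_of_nonneg_left hexp (hG0 β)
    linarith
  · simp only [Pi.add_apply]
    rw [hint]
    positivity
  · simp only [Pi.add_apply]
    have hsq : √(π / (2 * (ω.im * ρ))) = √(π / (2 * ω.im)) * ρ ^ (-(1 / 2) : ℝ) := by
      rw [Real.rpow_neg hρ.le, ← Real.sqrt_eq_rpow, ← Real.sqrt_inv, ← Real.sqrt_mul (by positivity)]
      congr 1
      field_simp
    rw [hint, hsq, ← neg_mul]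
    have hr : 0 ≤ ρ ^ (-(1 / 2) : ℝ) := by positivity
    have hE := Real.exp_pos (-ω.im * ρ)
    have hS : 0 ≤ √(π / (2 * ω.im)) := Real.sqrt_nonneg _
    calc _ ≤ 32 * (2 * Real.exp (-ω.im * ρ) * (√(π / (2 * ω.im)) * ρ ^ (-(1 / 2) : ℝ)))
          + Real.exp (-ω.im * ρ) * (32 * π) := by gcongr
      _ = (64 * √(π / (2 * ω.im)) * ρ ^ (-(1 / 2) : ℝ) + 32 * π) * Real.exp (-ω.im * ρ) := by ring
      _ ≤ ((64 * √(π / (2 * ω.im)) + 32 * π) * (1 + ρ ^ (-(1 / 2) : ℝ)))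
            * Real.exp (-ω.im * ρ) := by
          gcongr
          nlinarith [Real.pi_pos, mul_nonneg Real.pi_pos.le hr]
      _ = _ := by ring
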